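/- Let 0 < μ < L < ∞ and q = μ/L. Let f : ℝ^n → ℝ be L-smooth and μ-strongly convex with minimizer x_⋆ and minimal value f_⋆ = f(x_⋆). Let x_{k−1}, d_{k−1} ∈ ℝ^n with ∇f(x_{k−1}) ≠ 0 and ⟨∇f(x_{k−1}), d_{k−1}⟩ = ‖∇f(x_{k−1})‖². Let γ_{k−1} ∈ ℝ minimize γ ↦ f(x_{k−1} − γ d_{k−1}) over ℝ, set x_k = x_{k−1} − γ_{k−1} d_{k−1}, let β_{k−1} = (‖∇f(x_k)‖² − ⟨∇f(x_k), ∇f(x_{k−1})⟩)/‖∇f(x_{k−1})‖², and set d_k = ∇f(x_k) + β_{k−1} d_{k−1} (one Polak–Ribière–Polyak iteration with exact line search). Let γ_k ∈ ℝ minimize γ ↦ f(x_k − γ d_k) over ℝ and set x_{k+1} = x_k − γ_k d_k. Then f(x_{k+1}) − f_⋆ ≤ ((1 − q²)/(1 + q²))² (f(x_k) − f_⋆). -/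

import Mathlib

open scoped InnerProductSpace

/-!
Let `x₀, x₁, x₂` be consecutive iterates with gradients `g₀, g₁, g₂`, where `x₂ - x₁` is parallel
to `d₁`. The Polak–Ribière–Polyak choice of `β` makes `d₁` orthogonal to `g₁ - g₀`, and for an
`L`-smooth `μ`-strongly convex function `g₁ - g₀` is, up to scaling, within relative error
`ε = (L - μ) / (L + μ)` of `x₁ - x₀`. As `g₁` is orthogonal to `x₁ - x₀`, and `d₁` differs from `g₁`
by a multiple of `x₁ - x₀`, a suitable multiple of `d₁` is within relative error `ε` of `g₁`. The
second line search makes `g₂` orthogonal to `d₁`, hence `⟪g₁, g₂⟫ ≤ ε ‖g₁‖ ‖g₂‖`.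

An exact line search whose gradients satisfy this for some `ε ∈ [0, 1]` contracts the gap by the
square of `(L (1 + ε) - μ (1 - ε)) / (L (1 + ε) + μ (1 - ε))`, the rate de Klerk, Glineur and Taylor
obtained for inexact gradient directions; here this is `(L² - μ²) / (L² + μ²)`. It follows from the
interpolation inequalities between `x⋆`, `x₁` and `x₂` by an explicit sum-of-squares certificate.
-/

section InnerProduct

variable {E : Type*} [NormedAddCommGroup E] [InnerProductSpace ℝ E]

lemma abs_inner_le_of_norm_sub_smul_le {x y z : E} {t ε : ℝ} (hyz : ⟪y, z⟫_ℝ = 0)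
    (hxy : ‖x - t • y‖ ≤ ε * ‖x‖) : |⟪x, z⟫_ℝ| ≤ ε * ‖x‖ * ‖z‖ :=
  calc |⟪x, z⟫_ℝ| = |⟪x - t • y, z⟫_ℝ| := by
        rw [inner_sub_left, real_inner_smul_left, hyz, mul_zero, sub_zero]
    _ ≤ ‖x - t • y‖ * ‖z‖ := abs_real_inner_le_norm _ _
    _ ≤ ε * ‖x‖ * ‖z‖ := by gcongr

lemma norm_sub_smul_le_of_norm_sq_le {x y : E} {ε : ℝ} (hε₀ : 0 ≤ ε) (hε₁ : ε ≤ 1)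
    (hxy : ⟪x, y⟫_ℝ = ‖x‖ ^ 2) (hnorm : (1 - ε ^ 2) * ‖y‖ ^ 2 ≤ ‖x‖ ^ 2) :
    ‖x - (1 - ε ^ 2) • y‖ ≤ ε * ‖x‖ := by
  have ht : 0 ≤ 1 - ε ^ 2 := sub_nonneg.2 (pow_le_one₀ hε₀ hε₁)
  refine le_of_sq_le_sq ?_ (by positivity)
  calc ‖x - (1 - ε ^ 2) • y‖ ^ 2
      = ‖x‖ ^ 2 - 2 * (1 - ε ^ 2) * ‖x‖ ^ 2 + (1 - ε ^ 2) * ((1 - ε ^ 2) * ‖y‖ ^ 2) := by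
        rw [norm_sub_sq_real, real_inner_smul_right, hxy, norm_smul, mul_pow, Real.norm_eq_abs,
          sq_abs]
        ring
    _ ≤ ‖x‖ ^ 2 - 2 * (1 - ε ^ 2) * ‖x‖ ^ 2 + (1 - ε ^ 2) * ‖x‖ ^ 2 := by gcongr
    _ = (ε * ‖x‖) ^ 2 := by ring

lemma one_sub_sq_mul_norm_add_smul_sq_le {x d : E} {β ε : ℝ} (hxd : ⟪x, d⟫_ℝ = 0)
    (hd : |⟪d, x + β • d⟫_ℝ| ≤ ε * ‖d‖ * ‖x + β • d‖) :
    (1 - ε ^ 2) * ‖x + β • d‖ ^ 2 ≤ ‖x‖ ^ 2 := by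
  have pythagoras : ‖x + β • d‖ ^ 2 = ‖x‖ ^ 2 + β ^ 2 * ‖d‖ ^ 2 := by
    rw [norm_add_sq_real, real_inner_smul_right, hxd, norm_smul, mul_pow, Real.norm_eq_abs, sq_abs]
    ring
  obtain rfl | hd₀ := eq_or_ne d 0
  · rw [smul_zero, add_zero]
    exact mul_le_of_le_one_left (sq_nonneg _) (sub_le_self _ (sq_nonneg _))
  have hinner : ⟪d, x + β • d⟫_ℝ = β * ‖d‖ * ‖d‖ := by
    rw [inner_add_right, real_inner_comm, hxd, real_inner_smul_right, real_inner_self_eq_norm_sq]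
    ring
  have hβ : |β * ‖d‖| ≤ ε * ‖x + β • d‖ := by
    rw [hinner, abs_mul, abs_norm, mul_right_comm] at hd
    exact le_of_mul_le_mul_right hd (norm_pos_iff.2 hd₀)
  have hβ_sq : β ^ 2 * ‖d‖ ^ 2 ≤ ε ^ 2 * ‖x + β • d‖ ^ 2 := by
    simpa only [sq_abs, mul_pow] using pow_le_pow_left₀ (abs_nonneg _) hβ 2
  linarith

-- With `ρ = D / S`, the interpolation inequalities for the pairs `(x, y)`, `(x⋆, x)`, `(x⋆, y)`
-- enter with weights `ρ`, `ρ (1 - ρ)`, `1 - ρ`, cleared of denominators by `S ^ 2`. The right-hand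
-- side is the angle condition plus squares that vanish on the extremal quadratics with spectrum
-- `{μ, L}`.
lemma line_search_certificate (u v g h : E) {μ L ε S D : ℝ} (hε : 1 + ε ≠ 0) (hμL : L - μ ≠ 0)
    (hD : D ≠ 0) (hS_def : S = L * (1 + ε) + μ * (1 - ε))
    (hD_def : D = L * (1 + ε) - μ * (1 - ε)) :
    D * S * (μ / 2 * ‖u - v‖ ^ 2 + 1 / (2 * (L - μ)) * ‖(g - h) - μ • (u - v)‖ ^ 2)
      + D * (S - D) * (μ / 2 * ‖u‖ ^ 2 + 1 / (2 * (L - μ)) * ‖g - μ • u‖ ^ 2 - ⟪g, u⟫_ℝ)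
      + S * (S - D) * (μ / 2 * ‖v‖ ^ 2 + 1 / (2 * (L - μ)) * ‖h - μ • v‖ ^ 2 - ⟪h, v⟫_ℝ)
      + S * (D - S) * ⟪h, u - v⟫_ℝ
    = 1 / D * (ε * (D ^ 2 * ‖g‖ ^ 2 + S ^ 2 * ‖h‖ ^ 2) - 2 * D * S * ⟪g, h⟫_ℝ)
      + 1 / (2 * (L - μ)) * ((1 - ε) / (1 + ε) * ‖D • (g - μ • u) + S • (h - μ • v)‖ ^ 2
        + μ / ((1 + ε) * D) * ‖D • ((2 : ℝ) • g - S • (u - v)) - (2 * ε * S) • h‖ ^ 2) := by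
  simp only [← real_inner_self_eq_norm_sq, inner_add_left, inner_add_right, inner_sub_left,
    inner_sub_right, real_inner_smul_left, real_inner_smul_right, real_inner_comm u v,
    real_inner_comm u g, real_inner_comm u h, real_inner_comm v g, real_inner_comm v h,
    real_inner_comm g h]
  field_simp
  subst hS_def hD_def
  ring

end InnerProduct

section SmoothStronglyConvex

variable {E : Type*} [NormedAddCommGroup E] [InnerProductSpace ℝ E] [CompleteSpace E]
  {f : E → ℝ} {μ L : ℝ}

lemma hasDerivAt_comp_add_smul (hf : Differentiable ℝ f) (x v : E) (t : ℝ) :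
    HasDerivAt (fun s : ℝ ↦ f (x + s • v)) ⟪gradient f (x + t • v), v⟫_ℝ t := by
  have hline : HasDerivAt (fun s : ℝ ↦ x + s • v) v t := by
    simpa using ((hasDerivAt_id t).smul_const v).const_add x
  rw [inner_gradient_left]
  exact (hf _).hasFDerivAt.comp_hasDerivAt t hline

lemma inner_gradient_eq_zero_of_exact_line_search (hf : Differentiable ℝ f) {x d : E} {γ : ℝ}
    (hγ : ∀ t : ℝ, f (x - γ • d) ≤ f (x - t • d)) : ⟪gradient f (x - γ • d), d⟫_ℝ = 0 := by
  have hmin : IsLocalMin (fun s : ℝ ↦ f (x + s • (-d))) γ :=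
    .of_forall fun t ↦ by simpa only [smul_neg, ← sub_eq_add_neg] using hγ t
  have hderiv := hmin.hasDerivAt_eq_zero (hasDerivAt_comp_add_smul hf x (-d) γ)
  rwa [smul_neg, ← sub_eq_add_neg, inner_neg_right, neg_eq_zero] at hderiv

lemma le_add_inner_gradient_add_of_gradient_lipschitz (hf : Differentiable ℝ f)
    (hlip : ∀ a b, ‖gradient f a - gradient f b‖ ≤ L * ‖a - b‖) (x v : E) :
    f (x + v) ≤ f x + ⟪gradient f x, v⟫_ℝ + L / 2 * ‖v‖ ^ 2 := by
  have hline := hasDerivAt_comp_add_smul hf x v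
  have hquad (t : ℝ) : HasDerivAt
      (fun s ↦ f x + s * ⟪gradient f x, v⟫_ℝ + s ^ 2 * (L / 2 * ‖v‖ ^ 2))
      (⟪gradient f x, v⟫_ℝ + t * L * ‖v‖ ^ 2) t :=
    ((((hasDerivAt_id t).mul_const _).const_add _).add
      ((hasDerivAt_pow 2 t).mul_const _)).congr_deriv (by norm_num; ring)
  have hderiv_le (t : ℝ) (ht : t ∈ Set.Ico (0 : ℝ) 1) :
      ⟪gradient f (x + t • v), v⟫_ℝ ≤ ⟪gradient f x, v⟫_ℝ + t * L * ‖v‖ ^ 2 := by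
    rw [← sub_le_iff_le_add', ← inner_sub_left]
    calc ⟪gradient f (x + t • v) - gradient f x, v⟫_ℝ
        ≤ ‖gradient f (x + t • v) - gradient f x‖ * ‖v‖ := real_inner_le_norm _ _
      _ ≤ L * ‖x + t • v - x‖ * ‖v‖ := by gcongr; exact hlip _ _
      _ = t * L * ‖v‖ ^ 2 := by
        rw [add_sub_cancel_left, norm_smul, Real.norm_of_nonneg ht.1]
        ring
  have hle := image_le_of_deriv_right_le_deriv_boundary
    (fun t _ ↦ (hline t).continuousAt.continuousWithinAt) (fun t _ ↦ (hline t).hasDerivWithinAt)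
    (by simp) (fun t _ ↦ (hquad t).continuousAt.continuousWithinAt)
    (fun t _ ↦ (hquad t).hasDerivWithinAt) hderiv_le (Set.right_mem_Icc.2 zero_le_one)
  simpa using hle

/-- The class of `L`-smooth, `μ`-strongly convex functions on a Hilbert space, with strong convexity
stated as a quadratic lower bound at every point. The constants carry no sign condition. -/
structure SmoothStronglyConvex (μ L : ℝ) (f : E → ℝ) : Prop where
  differentiable : Differentiable ℝ f
  gradient_lipschitz : ∀ a b, ‖gradient f a - gradient f b‖ ≤ L * ‖a - b‖
  lower_bound : ∀ a b, f b + ⟪gradient f b, a - b⟫_ℝ + μ / 2 * ‖a - b‖ ^ 2 ≤ f a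

namespace SmoothStronglyConvex

lemma interpolation_inequality (hf : SmoothStronglyConvex μ L f) (hμL : μ < L) (x y : E) :
    ⟪gradient f y, x - y⟫_ℝ + μ / 2 * ‖x - y‖ ^ 2
      + 1 / (2 * (L - μ)) * ‖(gradient f x - gradient f y) - μ • (x - y)‖ ^ 2 ≤ f x - f y := by
  set k := (L - μ)⁻¹ with hk
  set e := (gradient f x - gradient f y) - μ • (x - y) with he
  -- The lower bound at `y` and the upper bound at `x` are compared at the point `x - k • e`.
  have hupper := le_add_inner_gradient_add_of_gradient_lipschitz hf.differentiable
    hf.gradient_lipschitz x (-(k • e))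
  have hlower := hf.lower_bound (x + -(k • e)) y
  have hshift : x + -(k • e) - y = (x - y) - k • e := by abel
  have hee : ⟪gradient f x, e⟫_ℝ = ⟪gradient f y, e⟫_ℝ + μ * ⟪x - y, e⟫_ℝ + ‖e‖ ^ 2 := by
    rw [← real_inner_self_eq_norm_sq, ← real_inner_smul_left, ← inner_add_left,
      ← inner_add_left, he]
    congr 1
    abel
  have hkL : k ^ 2 * (L - μ) = k := by
    rw [hk]; field_simp [(sub_pos.2 hμL).ne']
  rw [hshift, inner_sub_right, norm_sub_sq_real, real_inner_smul_right, real_inner_smul_right,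
    norm_smul, mul_pow, Real.norm_eq_abs, sq_abs] at hlower
  rw [inner_neg_right, real_inner_smul_right, hee, norm_neg, norm_smul, mul_pow, Real.norm_eq_abs,
    sq_abs] at hupper
  have hcoeff : 1 / (2 * (L - μ)) = k / 2 := by rw [hk]; field_simp
  rw [hcoeff]
  linear_combination hupper + hlower + ‖e‖ ^ 2 / 2 * hkL

lemma interpolation_inequality_of_gradient_eq_zero (hf : SmoothStronglyConvex μ L f) (hμL : μ < L)
    {xstar : E} (hstar : gradient f xstar = 0) (x : E) :
    μ / 2 * ‖x - xstar‖ ^ 2 + 1 / (2 * (L - μ)) * ‖gradient f x - μ • (x - xstar)‖ ^ 2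
      - ⟪gradient f x, x - xstar⟫_ℝ ≤ f xstar - f x := by
  have h := hf.interpolation_inequality hμL xstar x
  rw [hstar, zero_sub, ← neg_sub x, inner_neg_right, smul_neg, ← neg_sub', norm_neg, norm_neg] at h
  linarith

lemma norm_gradient_sub_sq_add_le (hf : SmoothStronglyConvex μ L f) (hμL : μ < L) (x y : E) :
    ‖gradient f x - gradient f y‖ ^ 2 + μ * L * ‖x - y‖ ^ 2
      ≤ (L + μ) * ⟪gradient f x - gradient f y, x - y⟫_ℝ := by
  have hpos : 0 < L - μ := sub_pos.2 hμL
  have hsum := add_le_add (hf.interpolation_inequality hμL x y)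
    (hf.interpolation_inequality hμL y x)
  rw [← neg_sub x y, ← neg_sub (gradient f x), smul_neg, ← neg_sub', norm_neg, norm_neg,
    inner_neg_right] at hsum
  have hstrong : μ * ‖x - y‖ ^ 2
      + 1 / (L - μ) * ‖(gradient f x - gradient f y) - μ • (x - y)‖ ^ 2
      ≤ ⟪gradient f x - gradient f y, x - y⟫_ℝ := by
    have hhalf : 1 / (L - μ) = 2 * (1 / (2 * (L - μ))) := by field_simp
    rw [hhalf, inner_sub_left]
    linarith
  rw [norm_sub_sq_real _ (μ • (x - y)), real_inner_smul_right, norm_smul, mul_pow,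
    Real.norm_eq_abs, sq_abs, ← le_sub_iff_add_le', one_div_mul_eq_div, div_le_iff₀ hpos] at hstrong
  linarith

lemma norm_sub_smul_gradient_sub_le (hf : SmoothStronglyConvex μ L f) (hμ : 0 ≤ μ) (hμL : μ < L)
    (x y : E) :
    ‖(x - y) - (2 / (L + μ)) • (gradient f x - gradient f y)‖
      ≤ (L - μ) / (L + μ) * ‖x - y‖ := by
  have hsum : 0 < L + μ := by linarith
  refine le_of_sq_le_sq ?_
    (mul_nonneg (div_nonneg (sub_nonneg.2 hμL.le) hsum.le) (norm_nonneg _))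
  rw [norm_sub_sq_real, real_inner_smul_right, real_inner_comm, norm_smul, mul_pow,
    Real.norm_eq_abs, sq_abs, mul_pow, div_pow, div_pow]
  have hsector := hf.norm_gradient_sub_sq_add_le hμL x y
  field_simp
  linarith

lemma gap_le_of_inner_gradient_le (hf : SmoothStronglyConvex μ L f) (hμ : 0 ≤ μ) (hμL : μ < L)
    {xstar x y : E} {ε : ℝ} (hstar : gradient f xstar = 0) (hε₀ : 0 ≤ ε) (hε₁ : ε ≤ 1)
    (horth : ⟪gradient f y, x - y⟫_ℝ = 0)
    (hangle : ⟪gradient f x, gradient f y⟫_ℝ ≤ ε * ‖gradient f x‖ * ‖gradient f y‖) :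
    f y - f xstar ≤
      ((L * (1 + ε) - μ * (1 - ε)) / (L * (1 + ε) + μ * (1 - ε))) ^ 2 * (f x - f xstar) := by
  have hsub : 0 < L - μ := sub_pos.2 hμL
  have hε : 0 ≤ 1 - ε := sub_nonneg.2 hε₁
  have hr : 0 ≤ μ * (1 - ε) := mul_nonneg hμ hε
  obtain ⟨D, hD_def⟩ : ∃ D, D = L * (1 + ε) - μ * (1 - ε) := ⟨_, rfl⟩
  obtain ⟨S, hS_def⟩ : ∃ S, S = L * (1 + ε) + μ * (1 - ε) := ⟨_, rfl⟩
  have hD : 0 < D := by rw [hD_def]; nlinarith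
  have hDS : 0 ≤ S - D := by linarith
  have hS : 0 < S := by linarith
  have hxy := hf.interpolation_inequality hμL x y
  have hx := hf.interpolation_inequality_of_gradient_eq_zero hμL hstar x
  have hy := hf.interpolation_inequality_of_gradient_eq_zero hμL hstar y
  rw [horth, zero_add] at hxy
  have hcert := line_search_certificate (x - xstar) (y - xstar) (gradient f x) (gradient f y)
    (by positivity) hsub.ne' hD.ne' hS_def hD_def
  rw [sub_sub_sub_cancel_right, horth, mul_zero, add_zero] at hcert
  have hcross : 0 ≤ ε * (D ^ 2 * ‖gradient f x‖ ^ 2 + S ^ 2 * ‖gradient f y‖ ^ 2)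
      - 2 * D * S * ⟪gradient f x, gradient f y⟫_ℝ := by
    have hamgm := mul_nonneg hε₀ (sq_nonneg (D * ‖gradient f x‖ - S * ‖gradient f y‖))
    have hscaled := mul_le_mul_of_nonneg_left hangle (by positivity : 0 ≤ 2 * D * S)
    linarith
  have hgap : S ^ 2 * (f y - f xstar) ≤ D ^ 2 * (f x - f xstar) := by
    have hsquares := hcert.ge.trans' (by positivity)
    have hxy' := mul_le_mul_of_nonneg_left hxy (by positivity : 0 ≤ D * S)
    have hx' := mul_le_mul_of_nonneg_left hx (by positivity : 0 ≤ D * (S - D))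
    have hy' := mul_le_mul_of_nonneg_left hy (by positivity : 0 ≤ S * (S - D))
    linarith
  rw [← hD_def, ← hS_def, div_pow, div_mul_eq_mul_div, le_div_iff₀ (by positivity), mul_comm]
  exact hgap

end SmoothStronglyConvex

end SmoothStronglyConvex

section PolakRibierePolyak

variable {E : Type*} [NormedAddCommGroup E] [InnerProductSpace ℝ E]

/-- The Polak–Ribière–Polyak direction `g + β • d` built from the new gradient `g`, the previous
gradient `p` and the previous direction `d`. The coefficient `β` is the junk value `0` when
`p = 0`. -/
noncomputable def prpDirection (g p d : E) : E :=
  g + ((‖g‖ ^ 2 - ⟪g, p⟫_ℝ) / ‖p‖ ^ 2) • d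

lemma inner_prpDirection_right {g d : E} (p : E) (hgd : ⟪g, d⟫_ℝ = 0) :
    ⟪g, prpDirection g p d⟫_ℝ = ‖g‖ ^ 2 := by
  rw [prpDirection, inner_add_right, real_inner_smul_right, hgd, mul_zero, add_zero,
    real_inner_self_eq_norm_sq]

lemma inner_sub_prpDirection_eq_zero {g p d : E} (hp : p ≠ 0) (hpd : ⟪p, d⟫_ℝ = ‖p‖ ^ 2)
    (hgd : ⟪g, d⟫_ℝ = 0) : ⟪p - g, prpDirection g p d⟫_ℝ = 0 := by
  rw [inner_sub_left, inner_prpDirection_right p hgd, prpDirection, inner_add_right,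
    real_inner_smul_right, hpd, real_inner_comm]
  field_simp
  ring

variable [CompleteSpace E] {f : E → ℝ} {μ L : ℝ}

lemma SmoothStronglyConvex.one_sub_sq_mul_norm_prpDirection_sq_le
    (hf : SmoothStronglyConvex μ L f) (hμ : 0 ≤ μ) (hμL : μ < L) {x d : E} {γ : ℝ}
    (hx : gradient f x ≠ 0) (hdir : ⟪gradient f x, d⟫_ℝ = ‖gradient f x‖ ^ 2)
    (horth : ⟪gradient f (x - γ • d), d⟫_ℝ = 0) :
    (1 - ((L - μ) / (L + μ)) ^ 2)
        * ‖prpDirection (gradient f (x - γ • d)) (gradient f x) d‖ ^ 2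
      ≤ ‖gradient f (x - γ • d)‖ ^ 2 := by
  have hγ : γ ≠ 0 := by
    rintro rfl
    rw [zero_smul, sub_zero, hdir] at horth
    exact hx (norm_eq_zero.1 (pow_eq_zero_iff two_ne_zero |>.1 horth))
  have hsector := hf.norm_sub_smul_gradient_sub_le hμ hμL x (x - γ • d)
  rw [sub_sub_cancel] at hsector
  have hscaled := abs_inner_le_of_norm_sub_smul_le
    (inner_sub_prpDirection_eq_zero hx hdir horth) hsector
  refine one_sub_sq_mul_norm_add_smul_sq_le horth
    (le_of_mul_le_mul_left (hscaled.trans_eq' ?_ |>.trans_eq ?_) (abs_pos.2 hγ))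
  · rw [real_inner_smul_left, abs_mul, prpDirection]
  · rw [norm_smul, Real.norm_eq_abs, prpDirection]
    ring

lemma SmoothStronglyConvex.inner_gradient_le_of_prpDirection
    (hf : SmoothStronglyConvex μ L f) (hμ : 0 ≤ μ) (hμL : μ < L) {x d h : E} {γ : ℝ}
    (hx : gradient f x ≠ 0) (hdir : ⟪gradient f x, d⟫_ℝ = ‖gradient f x‖ ^ 2)
    (horth : ⟪gradient f (x - γ • d), d⟫_ℝ = 0)
    (hh : ⟪h, prpDirection (gradient f (x - γ • d)) (gradient f x) d⟫_ℝ = 0) :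
    ⟪gradient f (x - γ • d), h⟫_ℝ ≤ (L - μ) / (L + μ) * ‖gradient f (x - γ • d)‖ * ‖h‖ := by
  have hsum : 0 < L + μ := by linarith
  have hε₀ : 0 ≤ (L - μ) / (L + μ) := div_nonneg (sub_nonneg.2 hμL.le) hsum.le
  have hε₁ : (L - μ) / (L + μ) ≤ 1 := (div_le_one hsum).2 (by linarith)
  have hdist := norm_sub_smul_le_of_norm_sq_le hε₀ hε₁ (inner_prpDirection_right _ horth)
    (hf.one_sub_sq_mul_norm_prpDirection_sq_le hμ hμL hx hdir horth)
  exact (le_abs_self _).trans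
    (abs_inner_le_of_norm_sub_smul_le ((real_inner_comm _ _).trans hh) hdist)

end PolakRibierePolyak

lemma contraction_rate_eq {μ L : ℝ} (hL : L ≠ 0) (hsum : L + μ ≠ 0) :
    (L * (1 + (L - μ) / (L + μ)) - μ * (1 - (L - μ) / (L + μ)))
        / (L * (1 + (L - μ) / (L + μ)) + μ * (1 - (L - μ) / (L + μ)))
      = (1 - (μ / L) ^ 2) / (1 + (μ / L) ^ 2) := by
  have hplus : 1 + (L - μ) / (L + μ) = 2 / (L + μ) * L := by field_simp; ring
  have hminus : 1 - (L - μ) / (L + μ) = 2 / (L + μ) * μ := by field_simp; ring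
  calc _ = (2 / (L + μ) * L ^ 2 * (1 - (μ / L) ^ 2))
        / (2 / (L + μ) * L ^ 2 * (1 + (μ / L) ^ 2)) := by
        rw [hplus, hminus]; congr 1 <;> field_simp
    _ = (1 - (μ / L) ^ 2) / (1 + (μ / L) ^ 2) :=
        mul_div_mul_left _ _ (by positivity)

theorem prp_worst_case_bound_general {E : Type*} [NormedAddCommGroup E] [InnerProductSpace ℝ E]
    [CompleteSpace E] {f : E → ℝ} {μ L : ℝ} (hf : SmoothStronglyConvex μ L f)
    (hμ : 0 ≤ μ) (hμL : μ < L) {xstar x₀ d₀ x₁ d₁ : E} {γ₀ γ₁ : ℝ}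
    (hmin : ∀ y, f xstar ≤ f y) (hx₀ : gradient f x₀ ≠ 0)
    (hd₀ : ⟪gradient f x₀, d₀⟫_ℝ = ‖gradient f x₀‖ ^ 2)
    (hγ₀ : ∀ t : ℝ, f (x₀ - γ₀ • d₀) ≤ f (x₀ - t • d₀)) (hx₁ : x₁ = x₀ - γ₀ • d₀)
    (hd₁ : d₁ = prpDirection (gradient f x₁) (gradient f x₀) d₀)
    (hγ₁ : ∀ t : ℝ, f (x₁ - γ₁ • d₁) ≤ f (x₁ - t • d₁)) :
    f (x₁ - γ₁ • d₁) - f xstar ≤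
      ((1 - (μ / L) ^ 2) / (1 + (μ / L) ^ 2)) ^ 2 * (f x₁ - f xstar) := by
  have hL : 0 < L := hμ.trans_lt hμL
  have hsum : 0 < L + μ := by positivity
  have hstar : gradient f xstar = 0 := by
    rw [gradient, IsLocalMin.fderiv_eq_zero (.of_forall hmin), map_zero]
  have horth₁ := inner_gradient_eq_zero_of_exact_line_search hf.differentiable hγ₀
  have horth₂ := inner_gradient_eq_zero_of_exact_line_search hf.differentiable hγ₁
  have hangle : ⟪gradient f x₁, gradient f (x₁ - γ₁ • d₁)⟫_ℝ
      ≤ (L - μ) / (L + μ) * ‖gradient f x₁‖ * ‖gradient f (x₁ - γ₁ • d₁)‖ := by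
    subst hx₁ hd₁
    exact hf.inner_gradient_le_of_prpDirection hμ hμL hx₀ hd₀ horth₁ horth₂
  have hstep : ⟪gradient f (x₁ - γ₁ • d₁), x₁ - (x₁ - γ₁ • d₁)⟫_ℝ = 0 := by
    rw [sub_sub_cancel, real_inner_smul_right, horth₂, mul_zero]
  rw [← contraction_rate_eq hL.ne' hsum.ne']
  exact hf.gap_le_of_inner_gradient_le hμ hμL hstar (div_nonneg (sub_nonneg.2 hμL.le) hsum.le)
    ((div_le_one hsum).2 (by linarith)) hstep hangle

/-- Worst-case bound for Polak–Ribière–Polyak: after one PRP iteration with exact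
line search followed by an exact line search along the resulting direction, the
function-value gap contracts by `((1 − q²)/(1 + q²))²`, where `q = μ/L`. -/
theorem prp_worst_case_bound
    (n : ℕ) (μ L : ℝ) (hμ : 0 < μ) (hμL : μ < L)
    (q : ℝ) (hq : q = μ / L)
    (f : EuclideanSpace ℝ (Fin n) → ℝ)
    (hdiff : Differentiable ℝ f)
    (hsmooth : ∀ a b, ‖gradient f a - gradient f b‖ ≤ L * ‖a - b‖)
    (hsc : ∀ a b, f a ≥ f b + ⟪gradient f b, a - b⟫_ℝ + μ / 2 * ‖a - b‖ ^ 2)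
    (xstar : EuclideanSpace ℝ (Fin n)) (hmin : ∀ y, f xstar ≤ f y)
    (xkm dkm : EuclideanSpace ℝ (Fin n))
    (hgkm : gradient f xkm ≠ 0)
    (hdir : ⟪gradient f xkm, dkm⟫_ℝ = ‖gradient f xkm‖ ^ 2)
    (γkm : ℝ) (hlsm : ∀ t : ℝ, f (xkm - γkm • dkm) ≤ f (xkm - t • dkm))
    (xk : EuclideanSpace ℝ (Fin n)) (hxk : xk = xkm - γkm • dkm)
    (βkm : ℝ)
    (hβ : βkm = (‖gradient f xk‖ ^ 2 - ⟪gradient f xk, gradient f xkm⟫_ℝ)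
        / ‖gradient f xkm‖ ^ 2)
    (dk : EuclideanSpace ℝ (Fin n)) (hdk : dk = gradient f xk + βkm • dkm)
    (γk : ℝ) (hls : ∀ t : ℝ, f (xk - γk • dk) ≤ f (xk - t • dk))
    (xk1 : EuclideanSpace ℝ (Fin n)) (hxk1 : xk1 = xk - γk • dk) :
    f xk1 - f xstar ≤ ((1 - q ^ 2) / (1 + q ^ 2)) ^ 2 * (f xk - f xstar) := by
  subst hq hxk hβ hdk hxk1
  exact prp_worst_case_bound_general ⟨hdiff, hsmooth, hsc⟩ hμ.le hμL hmin hgkm hdir hlsm rfl rfl hls
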